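/- There exist entanglement-annihilating channels which are not entanglement-breaking: for λ = 1/√3, the two-qubit channel E_λ⊗E_λ (with E_λ the qubit depolarizing channel) maps every two-qubit state to a separable state, yet it is not entanglement-breaking, since applying (E_λ⊗E_λ)⊗id to the three-qubit GHZ state |GHZ⟩⟨GHZ| (|GHZ⟩ = (|000⟩+|111⟩)/√2) produces a state that is entangled across the cut separating the first two qubits from the third. -/

import Mathlib

open Matrix
open scoped Kronecker ComplexOrder

/-- A quantum state: a positive semidefinite matrix of unit trace. -/
def IsState {ι : Type} [Fintype ι] (ρ : Matrix ι ι ℂ) : Prop :=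
  ρ.PosSemidef ∧ ρ.trace = 1

/-- Separability of a bipartite state across the `ιA | ιB` cut: a finite convex
combination of Kronecker products of states. -/
def IsSep {ιA ιB : Type} [Fintype ιA] [Fintype ιB]
    (ω : Matrix (ιA × ιB) (ιA × ιB) ℂ) : Prop :=
  ∃ (m : ℕ) (p : Fin m → ℝ) (ξ : Fin m → Matrix ιA ιA ℂ) (ζ : Fin m → Matrix ιB ιB ℂ),
    (∀ j, 0 ≤ p j) ∧ ((∑ j, p j) = 1) ∧ (∀ j, IsState (ξ j)) ∧ (∀ j, IsState (ζ j)) ∧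
    ω = ∑ j, (p j : ℂ) • (ξ j ⊗ₖ ζ j)

/-- The extension `E ⊗ id` of a map `E` by a trivial action on an `n`-dimensional ancilla. -/
def tensorId {ι : Type} (E : Matrix ι ι ℂ → Matrix ι ι ℂ) (n : ℕ)
    (X : Matrix (ι × Fin n) (ι × Fin n) ℂ) : Matrix (ι × Fin n) (ι × Fin n) ℂ :=
  Matrix.of fun p q => E (Matrix.of fun a c => X (a, p.2) (c, q.2)) p.1 q.1

/-- A quantum channel: a linear, trace-preserving, completely positive map. -/
def IsChannel {ι : Type} [Fintype ι] (E : Matrix ι ι ℂ → Matrix ι ι ℂ) : Prop :=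
  (∀ (c : ℂ) (X Y : Matrix ι ι ℂ), E (c • X + Y) = c • E X + E Y) ∧
  (∀ X, (E X).trace = X.trace) ∧
  (∀ (n : ℕ) (X : Matrix (ι × Fin n) (ι × Fin n) ℂ), X.PosSemidef → (tensorId E n X).PosSemidef)

/-- Entanglement-breaking channel: `E ⊗ id` maps every state to a separable state,
for every ancilla dimension `n ≥ 1`. -/
def IsEB {ι : Type} [Fintype ι] (E : Matrix ι ι ℂ → Matrix ι ι ℂ) : Prop :=
  ∀ (n : ℕ), 0 < n → ∀ ω : Matrix (ι × Fin n) (ι × Fin n) ℂ,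
    IsState ω → IsSep (tensorId E n ω)

/-- Entanglement-annihilating channel on a bipartite system: every state is mapped
to a separable state. -/
def IsEA {ιA ιB : Type} [Fintype ιA] [Fintype ιB]
    (E : Matrix (ιA × ιB) (ιA × ιB) ℂ → Matrix (ιA × ιB) (ιA × ιB) ℂ) : Prop :=
  ∀ ω : Matrix (ιA × ιB) (ιA × ιB) ℂ, IsState ω → IsSep (E ω)

/-- The map `F ⊗ id` acting as `F` on the first factor of a bipartite system. -/
def rTensor {ιA ιB : Type} (F : Matrix ιA ιA ℂ → Matrix ιA ιA ℂ)
    (X : Matrix (ιA × ιB) (ιA × ιB) ℂ) : Matrix (ιA × ιB) (ιA × ιB) ℂ :=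
  Matrix.of fun p q => F (Matrix.of fun a c => X (a, p.2) (c, q.2)) p.1 q.1

/-- The map `id ⊗ F` acting as `F` on the second factor of a bipartite system. -/
def lTensor {ιA ιB : Type} (F : Matrix ιB ιB ℂ → Matrix ιB ιB ℂ)
    (X : Matrix (ιA × ιB) (ιA × ιB) ℂ) : Matrix (ιA × ιB) (ιA × ιB) ℂ :=
  Matrix.of fun p q => F (Matrix.of fun b d => X (p.1, b) (q.1, d)) p.2 q.2

/-- The local map `E ⊗ F` on a bipartite system (for linear `E`, `F` this is the
usual tensor product map `(id ⊗ F) ∘ (E ⊗ id)`). -/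
def tensorMap {ιA ιB : Type} (E : Matrix ιA ιA ℂ → Matrix ιA ιA ℂ)
    (F : Matrix ιB ιB ℂ → Matrix ιB ιB ℂ)
    (X : Matrix (ιA × ιB) (ιA × ιB) ℂ) : Matrix (ιA × ιB) (ιA × ιB) ℂ :=
  lTensor F (rTensor E X)

/-- `k`-fold Kronecker product of single-particle matrices. -/
def kronPow {d k : ℕ} (ρ : Fin k → Matrix (Fin d) (Fin d) ℂ) :
    Matrix (Fin k → Fin d) (Fin k → Fin d) ℂ :=
  Matrix.of fun i j => ∏ t, ρ t (i t) (j t)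

/-- Full separability of a `k`-partite state: a finite convex combination of
`k`-fold Kronecker products of single-particle states. -/
def IsFullySep {d k : ℕ} (ω : Matrix (Fin k → Fin d) (Fin k → Fin d) ℂ) : Prop :=
  ∃ (m : ℕ) (p : Fin m → ℝ) (ρ : Fin m → Fin k → Matrix (Fin d) (Fin d) ℂ),
    (∀ j, 0 ≤ p j) ∧ ((∑ j, p j) = 1) ∧ (∀ j t, IsState (ρ j t)) ∧
    ω = ∑ j, (p j : ℂ) • kronPow (ρ j)

/-- The map applying `E` to the `t`-th particle of a `k`-partite system. -/
def applyAt {d k : ℕ} (E : Matrix (Fin d) (Fin d) ℂ → Matrix (Fin d) (Fin d) ℂ) (t : Fin k)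
    (X : Matrix (Fin k → Fin d) (Fin k → Fin d) ℂ) :
    Matrix (Fin k → Fin d) (Fin k → Fin d) ℂ :=
  Matrix.of fun i j =>
    E (Matrix.of fun a b => X (Function.update i t a) (Function.update j t b)) (i t) (j t)

/-- The `k`-fold tensor power `E ⊗ ⋯ ⊗ E` of a single-particle map `E`,
obtained by applying `E` to each of the `k` particles. -/
def tensorPow {d : ℕ} (E : Matrix (Fin d) (Fin d) ℂ → Matrix (Fin d) (Fin d) ℂ) (k : ℕ)
    (X : Matrix (Fin k → Fin d) (Fin k → Fin d) ℂ) :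
    Matrix (Fin k → Fin d) (Fin k → Fin d) ℂ :=
  (List.finRange k).foldr (applyAt E) X

/-- The qubit depolarizing channel `E_λ[X] = λ X + (1-λ) tr(X) I/2`. -/
noncomputable def depol (lam : ℝ) (X : Matrix (Fin 2) (Fin 2) ℂ) : Matrix (Fin 2) (Fin 2) ℂ :=
  (lam : ℂ) • X + ((1 - lam : ℝ) : ℂ) • X.trace • ((2 : ℂ)⁻¹ • (1 : Matrix (Fin 2) (Fin 2) ℂ))

/-- The maximally entangled two-qubit vector `(|00⟩ + |11⟩)/√2`. -/
noncomputable def psiPlus : (Fin 2 × Fin 2) → ℂ :=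
  fun p => if p.1 = p.2 then ((Real.sqrt 2 : ℝ) : ℂ)⁻¹ else 0

/-- The projection onto the maximally entangled two-qubit vector. -/
noncomputable def Pplus : Matrix (Fin 2 × Fin 2) (Fin 2 × Fin 2) ℂ :=
  Matrix.vecMulVec psiPlus (star psiPlus)

/-- Partial transposition on the second qubit of a two-qubit matrix. -/
def ptB (X : Matrix (Fin 2 × Fin 2) (Fin 2 × Fin 2) ℂ) :
    Matrix (Fin 2 × Fin 2) (Fin 2 × Fin 2) ℂ :=
  Matrix.of fun p q => X (p.1, q.2) (q.1, p.2)

/-- Partial transposition on the first factor (qubit 1 versus qubits 2,3). -/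
def pt1 (X : Matrix (Fin 2 × Fin 2 × Fin 2) (Fin 2 × Fin 2 × Fin 2) ℂ) :
    Matrix (Fin 2 × Fin 2 × Fin 2) (Fin 2 × Fin 2 × Fin 2) ℂ :=
  Matrix.of fun p q => X (q.1, p.2) (p.1, q.2)

/-- The three-qubit GHZ vector `(|000⟩ + |111⟩)/√2`. -/
noncomputable def ghzVec : (Fin 2 × Fin 2 × Fin 2) → ℂ :=
  fun p => if p.1 = p.2.1 ∧ p.2.1 = p.2.2 then ((Real.sqrt 2 : ℝ) : ℂ)⁻¹ else 0

/-- The three-qubit GHZ state `|GHZ⟩⟨GHZ|`. -/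
noncomputable def ghzState : Matrix (Fin 2 × Fin 2 × Fin 2) (Fin 2 × Fin 2 × Fin 2) ℂ :=
  Matrix.vecMulVec ghzVec (star ghzVec)


/-- The three-qubit GHZ vector, with the first two qubits grouped together. -/
noncomputable def ghzVec' : ((Fin 2 × Fin 2) × Fin 2) → ℂ :=
  fun p => if p.1.1 = p.1.2 ∧ p.1.2 = p.2 then ((Real.sqrt 2 : ℝ) : ℂ)⁻¹ else 0

/-- The three-qubit GHZ state `|GHZ⟩⟨GHZ|`, with the first two qubits grouped
together. -/
noncomputable def ghzState' : Matrix ((Fin 2 × Fin 2) × Fin 2) ((Fin 2 × Fin 2) × Fin 2) ℂ :=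
  Matrix.vecMulVec ghzVec' (star ghzVec')

/-!
Depolarizing channels commute with unitary conjugation, so by the Schmidt decomposition it suffices
to apply `E_λ ⊗ E_λ` to pure states with vector `a |00⟩ + b |11⟩`. With `p = (1 + λ) / 2` and
`q = (1 - λ) / 2`, the image is the sum, with weights `a²` and `b²`, of two matrices with diagonals
`(p, q) ⊗ (p, q)` and `(q, p) ⊗ (q, p)` and a common coherence between `|00⟩` and `|11⟩` of size at
most `λ² / 2`. Such a matrix is an average over local phases of product matrices as soon as its
coherence is at most `p q = (1 - λ²) / 4`, which holds for `λ² ≤ 1 / 3`.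

For the GHZ state, the image has coherence `λ² / 2` between `|000⟩` and `|111⟩`. Partial
transposition moves it to a `2 × 2` block with diagonal entries `q² / 2`, so the image is entangled
when `λ > q`, that is, when `λ > 1 / 3`.
-/

section LinearAlgebra

variable {𝕜 ι E F : Type*} [RCLike 𝕜] [Fintype ι]

theorem exists_orthonormalBasis_eq_norm_smul [NormedAddCommGroup E] [InnerProductSpace 𝕜 E]
    [FiniteDimensional 𝕜 E] (hι : Module.finrank 𝕜 E = Fintype.card ι) {v : ι → E}
    (hv : Pairwise fun i j => inner 𝕜 (v i) (v j) = 0) :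
    ∃ b : OrthonormalBasis ι 𝕜 E, ∀ i, v i = (‖v i‖ : 𝕜) • b i := by
  have hnorm : Orthonormal 𝕜 ({i | v i ≠ 0}.domRestrict fun i => (‖v i‖ : 𝕜)⁻¹ • v i) := by
    refine ⟨fun i => norm_smul_inv_norm i.2, fun i j hij => ?_⟩
    change inner 𝕜 ((‖v i‖ : 𝕜)⁻¹ • v i) ((‖v j‖ : 𝕜)⁻¹ • v j) = 0
    rw [inner_smul_left, inner_smul_right,
      hv (Subtype.coe_injective.ne hij), mul_zero, mul_zero]
  obtain ⟨b, hb⟩ := hnorm.exists_orthonormalBasis_extension_of_card_eq hι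
  refine ⟨b, fun i => ?_⟩
  by_cases hi : v i = 0
  · simp [hi]
  · rw [hb i hi, smul_inv_smul₀ (by simpa using hi)]

theorem exists_orthonormalBasis_apply_eq_smul [NormedAddCommGroup E] [InnerProductSpace 𝕜 E]
    [FiniteDimensional 𝕜 E] [NormedAddCommGroup F] [InnerProductSpace 𝕜 F]
    [FiniteDimensional 𝕜 F] (hE : Module.finrank 𝕜 E = Fintype.card ι)
    (hF : Module.finrank 𝕜 F = Fintype.card ι) (T : E →ₗ[𝕜] F) :
    ∃ (b : OrthonormalBasis ι 𝕜 E) (c : OrthonormalBasis ι 𝕜 F) (σ : ι → ℝ),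
      (∀ i, 0 ≤ σ i) ∧ ∀ i, T (b i) = (σ i : 𝕜) • c i := by
  have hT := T.isSymmetric_adjoint_comp_self
  let b := (hT.eigenvectorBasis hE).reindex (Fintype.equivFin ι).symm
  have horth : Pairwise fun i j => inner 𝕜 (T (b i)) (T (b j)) = 0 := by
    intro i j hij
    have heig : T.adjoint (T (b j)) = (hT.eigenvalues hE (Fintype.equivFin ι j) : 𝕜) • b j := by
      simpa only [b, OrthonormalBasis.reindex_apply, Equiv.symm_symm, LinearMap.comp_apply] using
        hT.apply_eigenvectorBasis hE (Fintype.equivFin ι j)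
    rw [← LinearMap.adjoint_inner_right, heig, inner_smul_right, b.orthonormal.2 hij, mul_zero]
  obtain ⟨c, hc⟩ := exists_orthonormalBasis_eq_norm_smul hF horth
  exact ⟨b, c, fun i => ‖T (b i)‖, fun i => norm_nonneg _, hc⟩

theorem exists_unitary_mul_diagonal_mul_star [DecidableEq ι] (M : Matrix ι ι 𝕜) :
    ∃ U ∈ unitaryGroup ι 𝕜, ∃ V ∈ unitaryGroup ι 𝕜, ∃ σ : ι → ℝ,
      (∀ i, 0 ≤ σ i) ∧ M = U * diagonal (fun i => (σ i : 𝕜)) * star V := by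
  have hrank : Module.finrank 𝕜 (EuclideanSpace 𝕜 ι) = Fintype.card ι := finrank_euclideanSpace
  obtain ⟨b, c, σ, hσ, hM⟩ :=
    exists_orthonormalBasis_apply_eq_smul hrank hrank (toEuclideanLin M)
  let e := EuclideanSpace.basisFun ι 𝕜
  have hV : e.toBasis.toMatrix b ∈ unitaryGroup ι 𝕜 := e.toMatrix_orthonormalBasis_mem_unitary b
  refine ⟨e.toBasis.toMatrix c, e.toMatrix_orthonormalBasis_mem_unitary c, _, hV, σ, hσ, ?_⟩
  have hMV : M * e.toBasis.toMatrix b =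
      e.toBasis.toMatrix c * diagonal (fun i => (σ i : 𝕜)) := by
    ext i j
    have hentry : (M *ᵥ (b j).ofLp) i = (σ j : 𝕜) * (c j).ofLp i :=
      congrArg (fun x => x.ofLp i) (hM j)
    rw [mul_diagonal, mul_comm]
    exact hentry
  rw [← hMV, Matrix.mul_assoc, mem_unitaryGroup_iff.1 hV, Matrix.mul_one]

theorem exists_kronecker_mulVec_vec_diagonal [DecidableEq ι] (ψ : ι × ι → 𝕜) :
    ∃ U ∈ unitaryGroup ι 𝕜, ∃ V ∈ unitaryGroup ι 𝕜, ∃ σ : ι → ℝ,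
      (∀ i, 0 ≤ σ i) ∧ ψ = (U ⊗ₖ V) *ᵥ vec (diagonal fun i => (σ i : 𝕜)) := by
  obtain ⟨V, hV, W, hW, σ, hσ, hM⟩ :=
    exists_unitary_mul_diagonal_mul_star (of fun i j => ψ (j, i))
  refine ⟨(star W)ᵀ, ?_, V, hV, σ, hσ, ?_⟩
  · exact transpose_mem_unitaryGroup_iff.2 (Unitary.star_mem hW)
  · rw [kronecker_mulVec_vec, transpose_transpose, ← hM]
    rfl

theorem posSemidef_fin_two_of_trace_nonneg_of_det_nonneg {A : Matrix (Fin 2) (Fin 2) 𝕜}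
    (hA : A.IsHermitian) (htrace : 0 ≤ A.trace) (hdet : 0 ≤ A.det) : A.PosSemidef := by
  rw [hA.trace_eq_sum_eigenvalues, Fin.sum_univ_two] at htrace
  rw [hA.det_eq_prod_eigenvalues, Fin.prod_univ_two] at hdet
  norm_cast at htrace hdet
  rw [hA.posSemidef_iff_eigenvalues_nonneg, Pi.le_def, Fin.forall_fin_two]
  constructor <;> simp only [Pi.zero_apply] <;> nlinarith

theorem posSemidef_fin_two_of_norm_sq_le {p q : ℝ} (hp : 0 ≤ p) (hq : 0 ≤ q) {w : 𝕜}
    (hw : ‖w‖ ^ 2 ≤ p * q) : (!![(p : 𝕜), w; star w, q]).PosSemidef := by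
  refine posSemidef_fin_two_of_trace_nonneg_of_det_nonneg ?_ ?_ ?_
  · ext i j
    fin_cases i <;> fin_cases j <;> simp
  · rw [trace_fin_two_of]
    exact_mod_cast add_nonneg hp hq
  · rw [det_fin_two_of, RCLike.star_def, RCLike.mul_conj]
    exact_mod_cast sub_nonneg.2 hw

theorem add_apply_le_add_diag_of_posSemidef {n : Type*} [Finite n] {A : Matrix n n 𝕜}
    (hA : A.PosSemidef) (i j : n) : A i j + A j i ≤ A i i + A j j := by
  classical
  cases nonempty_fintype n
  have h := hA.dotProduct_mulVec_nonneg (Pi.single i 1 - Pi.single j 1)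
  rw [← sub_nonneg]
  refine h.trans_eq ?_
  simp [mulVec_sub, sub_dotProduct, dotProduct_sub]
  ring

theorem vecMulVec_vec_diagonal {R : Type*} [DecidableEq ι] [NonAssocSemiring R]
    (v w : ι → R) : vecMulVec (vec (diagonal v)) (vec (diagonal w)) =
      ∑ s, ∑ t, (v s * w t) • (single s t (1 : R) ⊗ₖ single s t (1 : R)) := by
  ext ⟨i, k⟩ ⟨j, l⟩
  by_cases hik : k = i <;> by_cases hjl : l = j <;>
    simp [vecMulVec_apply, vec, Matrix.sum_apply, single_apply, ite_and, hik, hjl]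

theorem kronecker_induction {R ιA ιB : Type*} [CommSemiring R] [Finite ιA] [Finite ιB]
    {P : Matrix (ιA × ιB) (ιA × ιB) R → Prop} (X : Matrix (ιA × ιB) (ιA × ιB) R)
    (add : ∀ X Y, P X → P Y → P (X + Y)) (kronecker : ∀ A B, P (A ⊗ₖ B)) : P X := by
  classical
  refine Matrix.induction_on' X ?_ add ?_
  · rw [← zero_kronecker (0 : Matrix ιB ιB R)]
    exact kronecker 0 0
  · rintro ⟨i, k⟩ ⟨j, l⟩ x
    rw [← mul_one x, ← single_kronecker_single]
    exact kronecker _ _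

end LinearAlgebra

section Separable

variable {ιA ιB : Type} [Fintype ιA] [Fintype ιB]

theorem exists_eq_smul_isState {ι : Type} [Fintype ι] {A : Matrix ι ι ℂ} (hA : A.PosSemidef)
    (hA0 : A ≠ 0) : ∃ r : ℝ, 0 ≤ r ∧ ∃ ξ, IsState ξ ∧ A = r • ξ := by
  obtain ⟨r, hr, hrA⟩ := RCLike.nonneg_iff_exists_ofReal.1 hA.trace_nonneg
  have hr0 : r ≠ 0 := by
    rintro rfl
    exact hA0 (hA.trace_eq_zero_iff.1 (by simpa using hrA.symm))
  refine ⟨r, hr, r⁻¹ • A, ⟨hA.smul (inv_nonneg.2 hr), ?_⟩, (smul_inv_smul₀ hr0 A).symm⟩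
  rw [trace_smul, ← hrA, RCLike.real_smul_eq_coe_mul, ← RCLike.ofReal_mul, inv_mul_cancel₀ hr0,
    RCLike.ofReal_one]

variable (ιA ιB) in
/-- The cone of unnormalised separable states: the conical combinations of product states. -/
noncomputable def sepCone : PointedCone ℝ (Matrix (ιA × ιB) (ιA × ιB) ℂ) :=
  PointedCone.hull ℝ (Set.image2 (· ⊗ₖ ·) {ξ | IsState ξ} {ζ | IsState ζ})

theorem kronecker_mem_sepCone {A : Matrix ιA ιA ℂ} {B : Matrix ιB ιB ℂ} (hA : A.PosSemidef)
    (hB : B.PosSemidef) : A ⊗ₖ B ∈ sepCone ιA ιB := by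
  rcases eq_or_ne A 0 with rfl | hA0
  · simp
  rcases eq_or_ne B 0 with rfl | hB0
  · simp
  obtain ⟨r, hr, ξ, hξ, rfl⟩ := exists_eq_smul_isState hA hA0
  obtain ⟨s, hs, ζ, hζ, rfl⟩ := exists_eq_smul_isState hB hB0
  rw [smul_kronecker, kronecker_smul]
  exact PointedCone.smul_mem _ hr (PointedCone.smul_mem _ hs
    (PointedCone.subset_hull (Set.mem_image2_of_mem hξ hζ)))

theorem isSep_iff_mem_sepCone {ω : Matrix (ιA × ιB) (ιA × ιB) ℂ} :
    IsSep ω ↔ ω ∈ sepCone ιA ιB ∧ ω.trace = 1 := by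
  have htrace {m : ℕ} {p : Fin m → ℝ} {ξ : Fin m → Matrix ιA ιA ℂ} {ζ : Fin m → Matrix ιB ιB ℂ}
      (hξ : ∀ j, IsState (ξ j)) (hζ : ∀ j, IsState (ζ j)) :
      (∑ j, p j • (ξ j ⊗ₖ ζ j)).trace = (∑ j, p j : ℝ) := by
    simp [trace_sum, trace_smul, trace_kronecker, (hξ _).2, (hζ _).2]
  constructor
  · rintro ⟨m, p, ξ, ζ, hp, hp1, hξ, hζ, rfl⟩
    simp only [Complex.coe_smul]
    refine ⟨Submodule.sum_mem _ fun j _ => PointedCone.smul_mem _ (hp j)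
      (kronecker_mem_sepCone (hξ j).1 (hζ j).1), ?_⟩
    rw [htrace hξ hζ, hp1, Complex.ofReal_one]
  · rintro ⟨hω, hω1⟩
    obtain ⟨m, p, g, rfl⟩ := Submodule.mem_span_set'.1 hω
    choose ξ hξ ζ hζ hg using fun j => (g j).2
    simp only [← hg] at hω1 ⊢
    refine ⟨m, fun j => p j, ξ, ζ, fun j => (p j).2, ?_, hξ, hζ, ?_⟩
    · exact_mod_cast (htrace hξ hζ).symm.trans hω1
    · simp only [Complex.coe_smul]
      rfl

theorem mul_kronecker_mul_conjTranspose_mem_sepCone (A : Matrix ιA ιA ℂ) (B : Matrix ιB ιB ℂ)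
    {X : Matrix (ιA × ιB) (ιA × ιB) ℂ} (hX : X ∈ sepCone ιA ιB) :
    (A ⊗ₖ B) * X * (A ⊗ₖ B)ᴴ ∈ sepCone ιA ιB := by
  induction hX using Submodule.span_induction with
  | mem X hX =>
    obtain ⟨ξ, hξ, ζ, hζ, rfl⟩ := hX
    rw [conjTranspose_kronecker, ← mul_kronecker_mul, ← mul_kronecker_mul]
    exact kronecker_mem_sepCone (hξ.1.mul_mul_conjTranspose_same A)
      (hζ.1.mul_mul_conjTranspose_same B)
  | zero => simp
  | add X Y _ _ hX hY =>
    rw [Matrix.mul_add, Matrix.add_mul]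
    exact add_mem hX hY
  | smul r X _ hX =>
    rw [mul_smul_comm, smul_mul_assoc]
    exact Submodule.smul_mem _ r hX

/-- The partial transpose of a bipartite matrix on its second tensor factor. -/
def partialTranspose (X : Matrix (ιA × ιB) (ιA × ιB) ℂ) : Matrix (ιA × ιB) (ιA × ιB) ℂ :=
  of fun i j => X (i.1, j.2) (j.1, i.2)

theorem posSemidef_partialTranspose_of_mem_sepCone {X : Matrix (ιA × ιB) (ιA × ιB) ℂ}
    (hX : X ∈ sepCone ιA ιB) : (partialTranspose X).PosSemidef := by
  induction hX using Submodule.span_induction with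
  | mem X hX =>
    obtain ⟨ξ, hξ, ζ, hζ, rfl⟩ := hX
    exact hξ.1.kronecker hζ.1.transpose
  | zero => exact .zero
  | add X Y _ _ hX hY => exact hX.add hY
  | smul r X _ hX => exact hX.smul r.2

theorem add_coherence_le_of_mem_sepCone {X : Matrix (ιA × ιB) (ιA × ιB) ℂ}
    (hX : X ∈ sepCone ιA ιB) (i j : ιA) (k l : ιB) :
    X (i, k) (j, l) + X (j, l) (i, k) ≤ X (i, l) (i, l) + X (j, k) (j, k) :=
  add_apply_le_add_diag_of_posSemidef (posSemidef_partialTranspose_of_mem_sepCone hX)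
    (i, l) (j, k)

end Separable

section LocalMap

variable {ιA ιB : Type} {E : Matrix ιA ιA ℂ → Matrix ιA ιA ℂ} {F : Matrix ιB ιB ℂ → Matrix ιB ιB ℂ}

theorem isLinearMap_rTensor (hE : IsLinearMap ℂ E) :
    IsLinearMap ℂ (rTensor (ιB := ιB) E) where
  map_add X Y := by
    ext p q
    exact congrFun₂ (hE.map_add (of fun a c => X (a, p.2) (c, q.2))
      (of fun a c => Y (a, p.2) (c, q.2))) p.1 q.1
  map_smul r X := by
    ext p q
    exact congrFun₂ (hE.map_smul r (of fun a c => X (a, p.2) (c, q.2))) p.1 q.1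

theorem isLinearMap_lTensor (hF : IsLinearMap ℂ F) :
    IsLinearMap ℂ (lTensor (ιA := ιA) F) where
  map_add X Y := by
    ext p q
    exact congrFun₂ (hF.map_add (of fun b d => X (p.1, b) (q.1, d))
      (of fun b d => Y (p.1, b) (q.1, d))) p.2 q.2
  map_smul r X := by
    ext p q
    exact congrFun₂ (hF.map_smul r (of fun b d => X (p.1, b) (q.1, d))) p.2 q.2

theorem isLinearMap_tensorMap (hE : IsLinearMap ℂ E) (hF : IsLinearMap ℂ F) :
    IsLinearMap ℂ (tensorMap E F) :=
  ((isLinearMap_lTensor hF).mk' _ ∘ₗ (isLinearMap_rTensor hE).mk' _).isLinear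

theorem rTensor_kronecker (hE : IsLinearMap ℂ E) (A : Matrix ιA ιA ℂ) (B : Matrix ιB ιB ℂ) :
    rTensor E (A ⊗ₖ B) = E A ⊗ₖ B := by
  ext p q
  have hslice : (of fun a c => (A ⊗ₖ B) (a, p.2) (c, q.2)) = B p.2 q.2 • A := by
    ext a c
    exact mul_comm _ _
  change E (of fun a c => (A ⊗ₖ B) (a, p.2) (c, q.2)) p.1 q.1 = E A p.1 q.1 * B p.2 q.2
  rw [hslice, hE.map_smul, Matrix.smul_apply, smul_eq_mul, mul_comm]

theorem lTensor_kronecker (hF : IsLinearMap ℂ F) (A : Matrix ιA ιA ℂ) (B : Matrix ιB ιB ℂ) :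
    lTensor F (A ⊗ₖ B) = A ⊗ₖ F B := by
  ext p q
  exact congrFun₂ (hF.map_smul (A p.1 q.1) B) p.2 q.2

theorem tensorMap_kronecker (hE : IsLinearMap ℂ E) (hF : IsLinearMap ℂ F)
    (A : Matrix ιA ιA ℂ) (B : Matrix ιB ιB ℂ) : tensorMap E F (A ⊗ₖ B) = E A ⊗ₖ F B := by
  rw [tensorMap, rTensor_kronecker hE, lTensor_kronecker hF]

variable [Fintype ιA] [Fintype ιB]

theorem trace_tensorMap (hE : IsLinearMap ℂ E) (hF : IsLinearMap ℂ F)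
    (hEtr : ∀ A, (E A).trace = A.trace) (hFtr : ∀ B, (F B).trace = B.trace)
    (X : Matrix (ιA × ιB) (ιA × ιB) ℂ) : (tensorMap E F X).trace = X.trace := by
  induction X using kronecker_induction with
  | add X Y hX hY => rw [(isLinearMap_tensorMap hE hF).map_add, trace_add, trace_add, hX, hY]
  | kronecker A B => rw [tensorMap_kronecker hE hF, trace_kronecker, trace_kronecker, hEtr, hFtr]

theorem tensorMap_conj_kronecker (hE : IsLinearMap ℂ E) (hF : IsLinearMap ℂ F)
    {U : Matrix ιA ιA ℂ} {V : Matrix ιB ιB ℂ} (hU : ∀ A, E (U * A * Uᴴ) = U * E A * Uᴴ)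
    (hV : ∀ B, F (V * B * Vᴴ) = V * F B * Vᴴ) (X : Matrix (ιA × ιB) (ιA × ιB) ℂ) :
    tensorMap E F ((U ⊗ₖ V) * X * (U ⊗ₖ V)ᴴ) = (U ⊗ₖ V) * tensorMap E F X * (U ⊗ₖ V)ᴴ := by
  induction X using kronecker_induction with
  | add X Y hX hY =>
    simp only [Matrix.mul_add, Matrix.add_mul, (isLinearMap_tensorMap hE hF).map_add, hX, hY]
  | kronecker A B =>
    simp only [conjTranspose_kronecker, ← mul_kronecker_mul, tensorMap_kronecker hE hF, hU, hV]

theorem tensorMap_vecMulVec_vec_diagonal {ι : Type} [Fintype ι] [DecidableEq ι]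
    {E F : Matrix ι ι ℂ → Matrix ι ι ℂ} (hE : IsLinearMap ℂ E) (hF : IsLinearMap ℂ F)
    (v w : ι → ℂ) : tensorMap E F (vecMulVec (vec (diagonal v)) (vec (diagonal w))) =
      ∑ s, ∑ t, (v s * w t) • (E (single s t 1) ⊗ₖ F (single s t 1)) := by
  have hEF := isLinearMap_tensorMap hE hF
  simp only [vecMulVec_vec_diagonal, ← IsLinearMap.mk'_apply hEF, map_sum, map_smul]
  simp only [IsLinearMap.mk'_apply, tensorMap_kronecker hE hF]

theorem isEA_of_vecMulVec_mem_sepCone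
    {Φ : Matrix (ιA × ιB) (ιA × ιB) ℂ → Matrix (ιA × ιB) (ιA × ιB) ℂ}
    (hΦ : IsLinearMap ℂ Φ) (htrace : ∀ X, (Φ X).trace = X.trace)
    (hpure : ∀ ψ, Φ (vecMulVec ψ (star ψ)) ∈ sepCone ιA ιB) : IsEA Φ := by
  rintro ω ⟨hω, hω1⟩
  refine isSep_iff_mem_sepCone.2 ⟨?_, (htrace ω).trans hω1⟩
  obtain ⟨m, ψ, rfl⟩ := posSemidef_iff_eq_sum_vecMulVec.1 hω
  rw [← IsLinearMap.mk'_apply hΦ, map_sum]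
  exact sum_mem fun i _ => hpure (ψ i)

end LocalMap

section Depolarizing

variable (l : ℝ)

theorem isLinearMap_depol : IsLinearMap ℂ (depol l) where
  map_add X Y := by
    simp only [depol, trace_add, smul_add, add_smul]
    abel
  map_smul r X := by
    simp only [depol, trace_smul]
    module

theorem trace_depol (X : Matrix (Fin 2) (Fin 2) ℂ) : (depol l X).trace = X.trace := by
  simp only [depol, trace_add, trace_smul, trace_one, smul_eq_mul]
  push_cast [Fintype.card_fin]
  ring

theorem depol_conj {U : Matrix (Fin 2) (Fin 2) ℂ} (hU : U ∈ unitaryGroup (Fin 2) ℂ)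
    (X : Matrix (Fin 2) (Fin 2) ℂ) : depol l (U * X * Uᴴ) = U * depol l X * Uᴴ := by
  have hmul_left : Uᴴ * U = 1 := mem_unitaryGroup_iff'.1 hU
  have hmul_right : U * Uᴴ = 1 := mem_unitaryGroup_iff.1 hU
  simp only [depol, trace_mul_cycle U, hmul_left, Matrix.mul_add, Matrix.add_mul, Matrix.mul_smul,
    Matrix.smul_mul, Matrix.mul_one, Matrix.one_mul, hmul_right]

theorem depol_single_self (i : Fin 2) : depol l (single i i 1) =
    (l : ℂ) • single i i 1 + ((1 - l) / 2 : ℂ) • 1 := by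
  rw [depol, trace_single_eq_same, one_smul, smul_smul]
  push_cast
  rfl

theorem depol_single_of_ne {i j : Fin 2} (hij : i ≠ j) :
    depol l (single i j 1) = (l : ℂ) • single i j 1 := by
  rw [depol, trace_single_eq_of_ne _ _ _ hij, zero_smul, smul_zero, add_zero]

end Depolarizing

section XState

/-- The two-qubit matrix with diagonal `(p, q) ⊗ (p, q)` and coherence `c` between the basis
vectors `00` and `11`; in the computational basis its nonzero entries form the letter X. -/
noncomputable def xState (p q : ℝ) (c : ℂ) : Matrix (Fin 2 × Fin 2) (Fin 2 × Fin 2) ℂ :=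
  diagonal ![(p : ℂ), q] ⊗ₖ diagonal ![(p : ℂ), q] +
    (c • (single 0 1 1 ⊗ₖ single 0 1 1) + star c • (single 1 0 1 ⊗ₖ single 1 0 1))

theorem xState_mul_self_eq_sum (p q : ℝ) (z : ℂ) : xState p q (z * z) =
    (4 : ℝ)⁻¹ • ∑ k : Fin 4,
      !![(p : ℂ), Complex.I ^ (k : ℕ) * z; star (Complex.I ^ (k : ℕ) * z), q] ⊗ₖ
      !![(p : ℂ), star (Complex.I ^ (k : ℕ)) * z; star (star (Complex.I ^ (k : ℕ)) * z), q] := by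
  -- The squares of the phases `I ^ k` sum to zero, so the coherence between `01` and `10` cancels.
  ext ⟨i, k⟩ ⟨j, l⟩
  simp only [xState, Fin.sum_univ_four]
  fin_cases i <;> fin_cases k <;> fin_cases j <;> fin_cases l <;>
    simp [pow_succ, mul_mul_mul_comm Complex.I _ Complex.I]
  all_goals ring

theorem xState_mem_sepCone {p q : ℝ} (hp : 0 ≤ p) (hq : 0 ≤ q) {c : ℂ} (hc : ‖c‖ ≤ p * q) :
    xState p q c ∈ sepCone (Fin 2) (Fin 2) := by
  obtain ⟨z, rfl⟩ := IsAlgClosed.exists_eq_mul_self c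
  have hz (u : ℂ) (hu : ‖u‖ = 1) : ‖u * z‖ ^ 2 ≤ p * q := by
    rwa [norm_mul, hu, one_mul, sq, ← norm_mul]
  rw [xState_mul_self_eq_sum]
  refine PointedCone.smul_mem _ (by norm_num) (sum_mem fun k _ => kronecker_mem_sepCone ?_ ?_)
  · exact posSemidef_fin_two_of_norm_sq_le hp hq (hz _ (by simp))
  · exact posSemidef_fin_two_of_norm_sq_le hp hq (hz _ (by simp))

end XState

section DepolarizingPair

variable {l : ℝ}

theorem tensorMap_depol_vecMulVec_vec_diagonal {t : ℝ} (v : Fin 2 → ℝ)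
    (ht : l ^ 2 * (v 0 * v 1) = (v 0 ^ 2 + v 1 ^ 2) * t) :
    tensorMap (depol l) (depol l)
      (vecMulVec (vec (diagonal fun i => (v i : ℂ))) (vec (diagonal fun i => (v i : ℂ)))) =
    v 0 ^ 2 • xState ((1 + l) / 2) ((1 - l) / 2) t +
      v 1 ^ 2 • xState ((1 - l) / 2) ((1 + l) / 2) t := by
  have hdiag0 : depol l (single 0 0 1) =
      diagonal ![(((1 + l) / 2 : ℝ) : ℂ), ((1 - l) / 2 : ℝ)] := by
    rw [depol_single_self]
    ext i j
    fin_cases i <;> fin_cases j <;> simp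
    ring
  have hdiag1 : depol l (single 1 1 1) =
      diagonal ![(((1 - l) / 2 : ℝ) : ℂ), ((1 + l) / 2 : ℝ)] := by
    rw [depol_single_self]
    ext i j
    fin_cases i <;> fin_cases j <;> simp
    ring
  have hcoherence : (l : ℂ) ^ 2 * (v 0 * v 1) = (v 0 ^ 2 + v 1 ^ 2) * t := mod_cast ht
  rw [tensorMap_vecMulVec_vec_diagonal (isLinearMap_depol l) (isLinearMap_depol l)]
  simp only [Fin.sum_univ_two, hdiag0, hdiag1, depol_single_of_ne l zero_ne_one,
    depol_single_of_ne l one_ne_zero, smul_kronecker, kronecker_smul, xState, Complex.star_def,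
    Complex.conj_ofReal, ← Complex.coe_smul, Complex.ofReal_pow]
  match_scalars <;> first | linear_combination hcoherence | ring

theorem tensorMap_depol_vecMulVec_vec_diagonal_mem_sepCone (hl : l ^ 2 ≤ 1 / 3) {v : Fin 2 → ℝ}
    (hv : ∀ i, 0 ≤ v i) :
    tensorMap (depol l) (depol l)
      (vecMulVec (vec (diagonal fun i => (v i : ℂ))) (vec (diagonal fun i => (v i : ℂ)))) ∈
    sepCone (Fin 2) (Fin 2) := by
  obtain ⟨t, ht0, ht, hvt⟩ : ∃ t, 0 ≤ t ∧ t ≤ 1 / 2 ∧ v 0 * v 1 = (v 0 ^ 2 + v 1 ^ 2) * t := by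
    refine ⟨v 0 * v 1 / (v 0 ^ 2 + v 1 ^ 2), div_nonneg (mul_nonneg (hv 0) (hv 1)) (by positivity),
      div_le_of_le_mul₀ (by positivity) (by norm_num) (by linarith [sq_nonneg (v 0 - v 1)]),
      (mul_div_cancel_of_imp' fun h => ?_).symm⟩
    have hv0 : v 0 ^ 2 = 0 := by linarith [sq_nonneg (v 0), sq_nonneg (v 1)]
    rw [pow_eq_zero_iff two_ne_zero] at hv0
    rw [hv0, zero_mul]
  have hp : 0 ≤ (1 + l) / 2 := by nlinarith
  have hq : 0 ≤ (1 - l) / 2 := by nlinarith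
  have hbound : ‖((l ^ 2 * t : ℝ) : ℂ)‖ ≤ (1 + l) / 2 * ((1 - l) / 2) := by
    rw [Complex.norm_of_nonneg (by positivity)]
    nlinarith
  rw [tensorMap_depol_vecMulVec_vec_diagonal v (t := l ^ 2 * t) (by rw [hvt]; ring)]
  have hmem := xState_mem_sepCone hp hq hbound
  have hmem' := xState_mem_sepCone hq hp (hbound.trans_eq (mul_comm _ _))
  exact add_mem (PointedCone.smul_mem _ (sq_nonneg _) hmem)
    (PointedCone.smul_mem _ (sq_nonneg _) hmem')

theorem isEA_tensorMap_depol (hl : l ^ 2 ≤ 1 / 3) : IsEA (tensorMap (depol l) (depol l)) := by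
  have hlin := isLinearMap_depol l
  have htrace := trace_depol l
  refine isEA_of_vecMulVec_mem_sepCone (isLinearMap_tensorMap hlin hlin)
    (trace_tensorMap hlin hlin htrace htrace) fun ψ => ?_
  obtain ⟨U, hU, V, hV, v, hv, hψ⟩ := exists_kronecker_mulVec_vec_diagonal ψ
  replace hψ : ψ = (U ⊗ₖ V) *ᵥ vec (diagonal fun i => (v i : ℂ)) := hψ
  have hreal : star (vec (diagonal fun i => (v i : ℂ))) = vec (diagonal fun i => (v i : ℂ)) := by
    ext i
    simp only [Pi.star_apply, vec, diagonal_apply]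
    split_ifs <;> simp
  rw [hψ, star_mulVec, ← vecMulVec_mul, ← mul_vecMulVec, hreal,
    tensorMap_conj_kronecker hlin hlin (depol_conj l hU) (depol_conj l hV)]
  exact mul_kronecker_mul_conjTranspose_mem_sepCone U V
    (tensorMap_depol_vecMulVec_vec_diagonal_mem_sepCone hl hv)

end DepolarizingPair

section GHZ

theorem ghzVec'_eq_smul : ghzVec' =
    ((Real.sqrt 2 : ℝ) : ℂ)⁻¹ • (Pi.single ((0, 0), 0) 1 + Pi.single ((1, 1), 1) 1) := by
  ext ⟨⟨a, b⟩, c⟩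
  fin_cases a <;> fin_cases b <;> fin_cases c <;> simp [ghzVec']

theorem ghzState'_eq_sum : ghzState' =
    (2⁻¹ : ℂ) • ∑ s, ∑ t, ((single s t 1 ⊗ₖ single s t 1) ⊗ₖ single s t 1) := by
  have hsqrt : star ((Real.sqrt 2 : ℝ) : ℂ)⁻¹ * ((Real.sqrt 2 : ℝ) : ℂ)⁻¹ = 2⁻¹ := by
    rw [Complex.star_def, map_inv₀, Complex.conj_ofReal, ← mul_inv, ← Complex.ofReal_mul,
      Real.mul_self_sqrt zero_le_two, Complex.ofReal_ofNat]
  rw [ghzState', ghzVec'_eq_smul, star_smul, vecMulVec_smul, smul_vecMulVec, smul_smul, hsqrt]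
  simp only [star_add, ← Pi.single_star, star_one, add_vecMulVec, vecMulVec_add,
    ← single_eq_single_vecMulVec_single, single_kronecker_single, mul_one, Fin.sum_univ_two]
  module

theorem isState_ghzState' : IsState ghzState' := by
  refine ⟨posSemidef_vecMulVec_self_star _, ?_⟩
  norm_num [ghzState'_eq_sum, Fin.sum_univ_two, trace_kronecker, trace_single_eq_of_ne]

theorem rTensor_tensorMap_ghzState' {E F : Matrix (Fin 2) (Fin 2) ℂ → Matrix (Fin 2) (Fin 2) ℂ}
    (hE : IsLinearMap ℂ E) (hF : IsLinearMap ℂ F) : rTensor (tensorMap E F) ghzState' =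
    (2⁻¹ : ℂ) • ∑ s, ∑ t, ((E (single s t 1) ⊗ₖ F (single s t 1)) ⊗ₖ single s t 1) := by
  have hEF := isLinearMap_tensorMap hE hF
  have hlin := isLinearMap_rTensor (ιB := Fin 2) hEF
  rw [ghzState'_eq_sum, ← IsLinearMap.mk'_apply hlin]
  simp only [map_smul, map_sum]
  simp only [IsLinearMap.mk'_apply, rTensor_kronecker hEF, tensorMap_kronecker hE hF]

theorem not_isSep_rTensor_ghzState' {l : ℝ} (hl : 1 / 3 < l) :
    ¬ IsSep (rTensor (tensorMap (depol l) (depol l)) ghzState') := by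
  intro hsep
  have hlin := isLinearMap_depol l
  have h := add_coherence_le_of_mem_sepCone (isSep_iff_mem_sepCone.1 hsep).1 (0, 0) (1, 1) 0 1
  have hle : (l * l : ℂ) ≤ (1 - l) / 2 * ((1 - l) / 2) := by
    simpa [rTensor_tensorMap_ghzState' hlin hlin, Fin.sum_univ_two, depol_single_self,
      depol_single_of_ne, Matrix.add_apply, ← two_mul] using h
  norm_cast at hle
  nlinarith [mul_pos (sub_pos.2 hl) (by linarith : 0 < l + 1)]

end GHZ

theorem stmt_17_general {l : ℝ} (hl : 1 / 3 < l) (hl' : l ^ 2 ≤ 1 / 3) :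
    (∀ ω : Matrix (Fin 2 × Fin 2) (Fin 2 × Fin 2) ℂ, IsState ω →
      IsSep (tensorMap (depol l) (depol l) ω)) ∧
    ¬ IsEB (tensorMap (depol l) (depol l)) ∧
    ¬ IsSep (rTensor (tensorMap (depol l) (depol l)) ghzState') := by
  have hghz := not_isSep_rTensor_ghzState' hl
  exact ⟨isEA_tensorMap_depol hl', fun h => hghz (h 2 two_pos _ isState_ghzState'), hghz⟩

/-- For `λ = 1/√3` the two-qubit channel `E_λ ⊗ E_λ` is
entanglement-annihilating (it maps every two-qubit state to a separable state)
but it is not entanglement-breaking: applying `(E_λ ⊗ E_λ) ⊗ id` to the GHZ state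
produces a state entangled across the `12|3` cut. -/
theorem stmt_17 :
    (∀ ω : Matrix (Fin 2 × Fin 2) (Fin 2 × Fin 2) ℂ, IsState ω →
      IsSep (tensorMap (depol (Real.sqrt 3)⁻¹) (depol (Real.sqrt 3)⁻¹) ω)) ∧
    ¬ IsEB (tensorMap (depol (Real.sqrt 3)⁻¹) (depol (Real.sqrt 3)⁻¹)) ∧
    ¬ IsSep (rTensor (tensorMap (depol (Real.sqrt 3)⁻¹) (depol (Real.sqrt 3)⁻¹)) ghzState')
    := by
  have hsq : (Real.sqrt 3)⁻¹ ^ 2 = 1 / 3 := by rw [inv_pow, Real.sq_sqrt zero_le_three, one_div]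
  exact stmt_17_general (by nlinarith [inv_pos.2 (Real.sqrt_pos.2 three_pos)]) hsq.le
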